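/- Let G be an even, real-valued extremizer of the problem defining 𝒞(∞) with G(0) = 1 (i.e., G ∈ ℰ, G(0) = 1, and 1/‖G‖₁ = 𝒞(∞)). Then for every F ∈ ℰ, the identity 𝒞(∞) · ∫_ℝ sgn(G(x)) F(x) dx = F(0) holds, where sgn denotes the sign function. -/

import Mathlib

open MeasureTheory Filter
open scoped FourierTransform Real

/-- The class 𝒜 sharp constant 𝒞(A). -/
noncomputable def Ccal (A : ℝ) : ℝ :=
  sSup { r : ℝ | ∃ F : ℝ → ℂ, Continuous F ∧ Integrable F ∧ F ≠ 0 ∧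
    r = (‖F 0‖ - A * ∫ t in {t : ℝ | 1 ≤ |t|}, ‖𝓕 F t‖) / ∫ x : ℝ, ‖F x‖ }

/-- 𝒞(∞), over the bandlimited class ℰ. -/
noncomputable def CcalInf : ℝ :=
  sSup { r : ℝ | ∃ F : ℝ → ℂ, Continuous F ∧ Integrable F ∧ F ≠ 0 ∧
    Function.support (𝓕 F) ⊆ Set.Icc (-1 : ℝ) 1 ∧
    r = ‖F 0‖ / ∫ x : ℝ, ‖F x‖ }

/-- Fourier transform of a real-valued function, as a real number (its real part). -/
noncomputable def FTr (F : ℝ → ℝ) (t : ℝ) : ℝ := (𝓕 (fun x => (F x : ℂ)) t).re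

/-- The class 𝒜⁺ sharp constant 𝒞⁺(A). -/
noncomputable def CcalPlus (A : ℝ) : ℝ :=
  sSup { r : ℝ | ∃ F : ℝ → ℝ, Continuous F ∧ Integrable F ∧ F ≠ 0 ∧ (∀ x, F (-x) = F x) ∧
    r = (F 0 - A * ∫ t in {t : ℝ | 1 ≤ |t|}, max (FTr F t) 0) / ∫ x : ℝ, |F x| }

/-- 𝒞⁺(∞), over the class ℰ⁺. -/
noncomputable def CcalPlusInf : ℝ :=
  sSup { r : ℝ | ∃ F : ℝ → ℝ, Continuous F ∧ Integrable F ∧ F ≠ 0 ∧ (∀ x, F (-x) = F x) ∧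
    (∀ t : ℝ, 1 ≤ |t| → FTr F t ≤ 0) ∧
    r = F 0 / ∫ x : ℝ, |F x| }

/-- The prime counting function at a real argument. -/
noncomputable def primePi (x : ℝ) : ℕ := Nat.primeCounting ⌊x⌋₊

/-- The Brun–Titchmarsh constant 𝐁. -/
noncomputable def BrunTitchmarsh : ℝ :=
  limsup (fun x : ℝ =>
    ((primePi (x + Real.sqrt x) : ℝ) - (primePi x : ℝ)) / (Real.sqrt x / Real.log x)) atTop

/-!
Along a line `ε ↦ G + ε F` in `ℰ`, the function `𝒞(∞) ‖G + ε F‖₁ - Re (G + ε F)(0)` is nonnegative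
and vanishes at `ε = 0`, so its derivative there is zero. The `L¹` norm is differentiable at `G`
because `G`, being band-limited, is real analytic and hence vanishes only on a null set. This gives
the real parts of the two sides of the identity; they determine the rest because both sides are
`ℂ`-linear in `F`.
-/

section FirstVariation

variable {α 𝕜 E : Type*} [RCLike 𝕜] [NormedAddCommGroup E] [InnerProductSpace 𝕜 E]

lemma hasDerivAt_norm_add_ofReal_smul {u : E} (hu : u ≠ 0) (v : E) :
    HasDerivAt (fun ε : ℝ => ‖u + (ε : 𝕜) • v‖) (RCLike.re (inner 𝕜 u v / ‖u‖ : 𝕜)) 0 := by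
  let : InnerProductSpace ℝ E := InnerProductSpace.rclikeToReal 𝕜 E
  have hline : HasDerivAt (fun ε : ℝ => u + ε • v) v 0 := by
    simpa using ((hasDerivAt_id (0 : ℝ)).smul_const v).const_add u
  have hsqrt := hline.norm_sq.sqrt (by simpa using hu)
  simp only [Real.sqrt_sq (norm_nonneg _), zero_smul, add_zero] at hsqrt
  simp only [RCLike.real_smul_eq_coe_smul (K := 𝕜)] at hsqrt
  refine hsqrt.congr_deriv ?_
  rw [mul_div_mul_left _ _ two_ne_zero, RCLike.div_re_ofReal, real_inner_eq_re_inner 𝕜]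

variable [MeasurableSpace α] {μ : Measure α}

lemma integrable_inner_div_norm {g f : α → E} (hg : AEStronglyMeasurable g μ)
    (hf : Integrable f μ) : Integrable (fun x => (inner 𝕜 (g x) (f x) / ‖g x‖ : 𝕜)) μ := by
  refine hf.norm.mono' ((hg.inner hf.1).div₀ ?_) (.of_forall fun x => ?_)
  · exact RCLike.continuous_ofReal.comp_aestronglyMeasurable hg.norm
  · rw [norm_div, RCLike.norm_ofReal, abs_norm]
    exact div_le_of_le_mul₀ (norm_nonneg _) (norm_nonneg _)
      ((norm_inner_le_norm _ _).trans_eq (mul_comm _ _))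

lemma hasDerivAt_integral_norm_add_ofReal_smul {g f : α → E} (hg : Integrable g μ)
    (hf : Integrable f μ) (hne : ∀ᵐ x ∂μ, g x ≠ 0) :
    HasDerivAt (fun ε : ℝ => ∫ x, ‖g x + (ε : 𝕜) • f x‖ ∂μ)
      (∫ x, RCLike.re (inner 𝕜 (g x) (f x) / ‖g x‖ : 𝕜) ∂μ) 0 := by
  refine (hasDerivAt_integral_of_dominated_loc_of_lip
    (F := fun (ε : ℝ) x => ‖g x + (ε : 𝕜) • f x‖) (bound := fun x => ‖f x‖) univ_mem
    (.of_forall fun ε => (hg.add (hf.smul (ε : 𝕜))).norm.1) ?_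
    (integrable_inner_div_norm hg.1 hf).re.1 ?_ hf.norm ?_).2
  · simpa using hg.norm
  · refine .of_forall fun x => LipschitzOnWith.of_dist_le_mul fun a _ b _ => ?_
    rw [Real.coe_nnabs, abs_norm, Real.dist_eq, Real.dist_eq]
    calc |‖g x + (a : 𝕜) • f x‖ - ‖g x + (b : 𝕜) • f x‖|
        ≤ ‖(g x + (a : 𝕜) • f x) - (g x + (b : 𝕜) • f x)‖ := abs_norm_sub_norm_le _ _
      _ = ‖f x‖ * |a - b| := by
        rw [add_sub_add_left_eq_sub, ← sub_smul, ← RCLike.ofReal_sub, norm_smul,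
          RCLike.norm_ofReal, mul_comm]
  · filter_upwards [hne] with x hx using hasDerivAt_norm_add_ofReal_smul hx (f x)

variable {V : Submodule 𝕜 (α → E)} {ℓ : V →ₗ[𝕜] 𝕜} {C : ℝ} {g : V}

lemma re_apply_eq_mul_integral_inner_of_norm_le (hV : ∀ f ∈ V, Integrable f μ)
    (hℓ : ∀ f : V, ‖ℓ f‖ ≤ C * ∫ x, ‖f.1 x‖ ∂μ) (hne : ∀ᵐ x ∂μ, g.1 x ≠ 0)
    (hg : ℓ g = (C * ∫ x, ‖g.1 x‖ ∂μ : ℝ)) (f : V) :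
    RCLike.re (ℓ f) = C * ∫ x, RCLike.re (inner 𝕜 (g.1 x) (f.1 x) / ‖g.1 x‖ : 𝕜) ∂μ := by
  let gap : ℝ → ℝ := fun ε =>
    C * (∫ x, ‖g.1 x + (ε : 𝕜) • f.1 x‖ ∂μ) - (RCLike.re (ℓ g) + ε * RCLike.re (ℓ f))
  have gap_zero : gap 0 = 0 := by simp [gap, hg]
  have gap_nonneg (ε : ℝ) : 0 ≤ gap ε := by
    have h := (RCLike.re_le_norm _).trans (hℓ (g + (ε : 𝕜) • f))
    rw [map_add, map_smul, smul_eq_mul, map_add, RCLike.re_ofReal_mul] at h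
    exact sub_nonneg.2 h
  have gap_deriv := ((hasDerivAt_integral_norm_add_ofReal_smul (𝕜 := 𝕜) (hV g g.2) (hV f f.2)
    hne).const_mul C).sub (((hasDerivAt_id (0 : ℝ)).mul_const (RCLike.re (ℓ f))).const_add
      (RCLike.re (ℓ g)))
  have gap_min : IsLocalMin gap 0 := .of_forall fun ε => gap_zero.trans_le (gap_nonneg ε)
  have := gap_min.hasDerivAt_eq_zero gap_deriv
  linarith

lemma eq_of_re_eq_of_map_smul {M : Type*} [SMul 𝕜 M] {φ ψ : M → 𝕜}
    (hφ : ∀ (c : 𝕜) m, φ (c • m) = c * φ m) (hψ : ∀ (c : 𝕜) m, ψ (c • m) = c * ψ m)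
    (h : ∀ m, RCLike.re (φ m) = RCLike.re (ψ m)) : φ = ψ := by
  funext m
  set w := φ m - ψ m with hw
  have hre : RCLike.re (starRingEnd 𝕜 w * w) = 0 := by
    conv_lhs => rw [hw, mul_sub, ← hφ, ← hψ, map_sub, h, sub_self]
  rw [RCLike.conj_mul, ← RCLike.ofReal_pow, RCLike.ofReal_re, sq_eq_zero_iff, norm_eq_zero] at hre
  exact sub_eq_zero.1 hre

theorem apply_eq_mul_integral_inner_of_norm_le (hV : ∀ f ∈ V, Integrable f μ)
    (hℓ : ∀ f : V, ‖ℓ f‖ ≤ C * ∫ x, ‖f.1 x‖ ∂μ) (hne : ∀ᵐ x ∂μ, g.1 x ≠ 0)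
    (hg : ℓ g = (C * ∫ x, ‖g.1 x‖ ∂μ : ℝ)) (f : V) :
    ℓ f = C * ∫ x, inner 𝕜 (g.1 x) (f.1 x) / (‖g.1 x‖ : 𝕜) ∂μ := by
  refine congrFun (eq_of_re_eq_of_map_smul (𝕜 := 𝕜) (φ := ℓ)
    (ψ := fun f : V => C * ∫ x, inner 𝕜 (g.1 x) (f.1 x) / (‖g.1 x‖ : 𝕜) ∂μ)
    (fun c f => map_smul ℓ c f) (fun c f => ?_) fun f => ?_) f
  · simp only [Submodule.coe_smul, Pi.smul_apply, inner_smul_right, mul_div_assoc,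
      integral_const_mul, mul_left_comm]
  · rw [re_apply_eq_mul_integral_inner_of_norm_le hV hℓ hne hg f, RCLike.re_ofReal_mul,
      integral_re (integrable_inner_div_norm (hV g g.2).1 (hV f f.2))]

end FirstVariation

section FourierLaplace

variable {E : Type*} [NormedAddCommGroup E] [NormedSpace ℂ E]

lemma norm_cexp_mul_ofReal_smul_le {z : ℂ} {t r R : ℝ} {v : E} (hz : ‖z‖ ≤ r)
    (ht : v ≠ 0 → |t| ≤ R) : ‖Complex.exp (z * t) • v‖ ≤ Real.exp (r * R) * ‖v‖ := by
  rcases eq_or_ne v 0 with rfl | hv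
  · simp
  rw [norm_smul]
  gcongr
  calc ‖Complex.exp (z * t)‖ ≤ Real.exp ‖z * t‖ := Complex.norm_exp_le_exp_norm _
    _ = Real.exp (‖z‖ * |t|) := by rw [norm_mul, Complex.norm_real, Real.norm_eq_abs]
    _ ≤ Real.exp (r * R) := by
      have := (norm_nonneg z).trans hz
      gcongr
      exact ht hv

lemma differentiable_integral_cexp_mul_smul {μ : Measure ℝ} {g : ℝ → E} (hg : Integrable g μ)
    (hs : Bornology.IsBounded (Function.support g)) :
    Differentiable ℂ fun z : ℂ => ∫ t : ℝ, Complex.exp (z * t) • g t ∂μ := by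
  obtain ⟨R, hR⟩ := hs.exists_norm_le
  have hbound (t : ℝ) : ‖(t : ℂ) • g t‖ ≤ R * ‖g t‖ := by
    rcases eq_or_ne (g t) 0 with h | h
    · simp [h]
    · rw [norm_smul, Complex.norm_real]
      gcongr
      exact hR t h
  have hmeas (z : ℂ) : AEStronglyMeasurable (fun t : ℝ => Complex.exp (z * t) • g t) μ :=
    (by fun_prop : Continuous fun t : ℝ => Complex.exp (z * t)).aestronglyMeasurable.smul hg.1
  intro z₀
  refine (hasDerivAt_integral_of_dominated_loc_of_deriv_le
    (F' := fun (z : ℂ) (t : ℝ) => Complex.exp (z * t) • (t : ℂ) • g t)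
    (bound := fun t => Real.exp ((‖z₀‖ + 1) * R) * (R * ‖g t‖))
    (Metric.ball_mem_nhds z₀ one_pos) (.of_forall hmeas) ?_ ?_ ?_
    ((hg.norm.const_mul R).const_mul _) ?_).2.differentiableAt
  · exact (hg.norm.const_mul (Real.exp (‖z₀‖ * R))).mono' (hmeas z₀)
      (.of_forall fun t => norm_cexp_mul_ofReal_smul_le le_rfl (hR t))
  · exact (by fun_prop : Continuous fun t : ℝ => Complex.exp (z₀ * t)).aestronglyMeasurable.smul
      (Complex.continuous_ofReal.aestronglyMeasurable.smul hg.1)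
  · refine .of_forall fun t z hz => ?_
    have hz' : ‖z‖ ≤ ‖z₀‖ + 1 := (norm_lt_of_mem_ball hz).le
    calc ‖Complex.exp (z * t) • (t : ℂ) • g t‖
        ≤ Real.exp ((‖z₀‖ + 1) * R) * ‖(t : ℂ) • g t‖ :=
          norm_cexp_mul_ofReal_smul_le hz' fun h => hR t (smul_ne_zero_iff.1 h).2
      _ ≤ Real.exp ((‖z₀‖ + 1) * R) * (R * ‖g t‖) := by gcongr; exact hbound t
  · refine .of_forall fun t z _ => ?_
    simpa only [mul_smul] using ((hasDerivAt_mul_const (t : ℂ)).cexp (x := z)).smul_const (g t)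

end FourierLaplace

lemma ae_ne_zero_of_analyticOnNhd {E : Type*} [NormedAddCommGroup E] [NormedSpace ℝ E]
    {f : ℝ → E} (hf : AnalyticOnNhd ℝ f Set.univ) {x₀ : ℝ} (hx₀ : f x₀ ≠ 0) :
    ∀ᵐ x, f x ≠ 0 := by
  have := ae_restrict_le_codiscreteWithin (μ := (volume : Measure ℝ)) MeasurableSet.univ
    (hf.preimage_zero_mem_codiscrete hx₀)
  rwa [Measure.restrict_univ] at this

section Bandlimited

variable {E : Type*} [NormedAddCommGroup E] [NormedSpace ℂ E] {s : Set ℝ} {f : ℝ → E}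

/-- The space of continuous integrable functions whose Fourier transform vanishes outside `s`. The
class `ℰ` is `bandlimited (Set.Icc (-1) 1)`. -/
noncomputable def bandlimited (s : Set ℝ) : Submodule ℂ (ℝ → E) where
  carrier := {f | Continuous f ∧ Integrable f ∧ Function.support (𝓕 f) ⊆ s}
  zero_mem' := ⟨continuous_const, integrable_zero _ _ _, by
    have h : 𝓕 (0 : ℝ → E) = 0 := by ext; simp [Real.fourier_eq]
    simp [h]⟩
  add_mem' := by
    rintro f g ⟨hfc, hfi, hfs⟩ ⟨hgc, hgi, hgs⟩
    refine ⟨hfc.add hgc, hfi.add hgi, ?_⟩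
    have h : 𝓕 (f + g) = 𝓕 f + 𝓕 g :=
      VectorFourier.fourierIntegral_add Real.continuous_fourierChar continuous_inner hfi hgi
    rw [h]
    exact (Function.support_add _ _).trans (Set.union_subset hfs hgs)
  smul_mem' := by
    rintro c f ⟨hfc, hfi, hfs⟩
    refine ⟨hfc.const_smul c, hfi.smul c, ?_⟩
    have h : 𝓕 (c • f) = c • 𝓕 f := VectorFourier.fourierIntegral_const_smul _ _ _ _ _
    rw [h]
    exact (Function.support_const_smul_subset c _).trans hfs

namespace bandlimited

lemma integrable_fourier (hs : Bornology.IsBounded s) (hf : f ∈ bandlimited s) :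
    Integrable (𝓕 f) := by
  have hcont : Continuous (𝓕 f) :=
    VectorFourier.fourierIntegral_continuous Real.continuous_fourierChar continuous_inner hf.2.1
  exact hcont.integrable_of_hasCompactSupport
    (.of_support_subset_isCompact hs.isCompact_closure (hf.2.2.trans subset_closure))

variable [CompleteSpace E]

lemma eq_integral_cexp_smul_fourier (hs : Bornology.IsBounded s) (hf : f ∈ bandlimited s)
    (x : ℝ) : f x = ∫ t : ℝ, Complex.exp (2 * π * Complex.I * x * t) • 𝓕 f t := by
  conv_lhs => rw [← hf.1.fourierInv_fourier_eq hf.2.1 (integrable_fourier hs hf)]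
  rw [Real.fourierInv_eq']
  congr 1 with t
  simp only [RCLike.inner_apply, conj_trivial]
  congr 2
  push_cast
  ring

lemma analyticOnNhd (hs : Bornology.IsBounded s) (hf : f ∈ bandlimited s) :
    AnalyticOnNhd ℝ f Set.univ := by
  intro x _
  have hentire := differentiable_integral_cexp_mul_smul (integrable_fourier hs hf)
    (hs.subset hf.2.2)
  have hline : AnalyticAt ℝ (fun y : ℝ => 2 * π * Complex.I * y) x :=
    analyticAt_const.mul (Complex.ofRealCLM.analyticAt x)
  exact ((hentire.analyticAt _).restrictScalars.comp hline).congr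
    (.of_forall fun y => (eq_integral_cexp_smul_fourier hs hf y).symm)

lemma norm_apply_le (hs : Bornology.IsBounded s) (hf : f ∈ bandlimited s) (x : ℝ) :
    ‖f x‖ ≤ (∫ y, ‖f y‖) * volume.real s := by
  rw [eq_integral_cexp_smul_fourier hs hf x, ← setIntegral_eq_integral_of_forall_compl_eq_zero
    (s := s) fun t ht => by
      rw [Function.notMem_support.1 (Set.notMem_subset hf.2.2 ht), smul_zero]]
  refine norm_setIntegral_le_of_norm_le_const hs.measure_lt_top fun t _ => ?_
  have hphase : ‖Complex.exp (2 * π * Complex.I * x * t)‖ = 1 := by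
    rw [← Complex.norm_exp_ofReal_mul_I (2 * π * x * t)]
    congr 2
    push_cast
    ring
  rw [norm_smul, hphase, one_mul]
  exact VectorFourier.norm_fourierIntegral_le_integral_norm _ _ _ _ _

end bandlimited

end Bandlimited

lemma integral_norm_pos_of_continuous {X E : Type*} [TopologicalSpace X] [MeasurableSpace X]
    {μ : Measure X} [μ.IsOpenPosMeasure] [NormedAddCommGroup E] {f : X → E} (hc : Continuous f)
    (hi : Integrable f μ) (h0 : f ≠ 0) : 0 < ∫ x, ‖f x‖ ∂μ := by
  obtain ⟨x, hx⟩ := Function.ne_iff.1 h0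
  exact integral_pos_of_integrable_nonneg_nonzero hc.norm hi.norm (fun _ => norm_nonneg _)
    (norm_ne_zero_iff.2 hx)

lemma norm_apply_zero_le_CcalInf_mul {F : ℝ → ℂ} (hF : F ∈ bandlimited (Set.Icc (-1 : ℝ) 1)) :
    ‖F 0‖ ≤ CcalInf * ∫ x, ‖F x‖ := by
  rcases eq_or_ne F 0 with rfl | hF0
  · simp
  rw [← div_le_iff₀ (integral_norm_pos_of_continuous hF.1 hF.2.1 hF0)]
  -- Without this bound the supremum would be the junk value `0`.
  refine le_csSup ⟨volume.real (Set.Icc (-1 : ℝ) 1), ?_⟩ ⟨F, hF.1, hF.2.1, hF0, hF.2.2, rfl⟩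
  rintro _ ⟨H, hHc, hHi, hH0, hHs, rfl⟩
  rw [div_le_iff₀' (integral_norm_pos_of_continuous hHc hHi hH0)]
  exact bandlimited.norm_apply_le (Metric.isBounded_Icc _ _) ⟨hHc, hHi, hHs⟩ 0

theorem extremizer_sign_identity_general {G : ℝ → ℂ}
    (hG : G ∈ bandlimited (Set.Icc (-1 : ℝ) 1)) (hG0 : G 0 = 1)
    (hGext : 1 / (∫ x, ‖G x‖) = CcalInf) {F : ℝ → ℂ}
    (hF : F ∈ bandlimited (Set.Icc (-1 : ℝ) 1)) :
    (CcalInf : ℂ) * ∫ x, starRingEnd ℂ (G x) / ‖G x‖ * F x = F 0 := by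
  have hne0 : G 0 ≠ 0 := hG0 ▸ one_ne_zero
  have hpos : 0 < ∫ x, ‖G x‖ :=
    integral_norm_pos_of_continuous hG.1 hG.2.1 fun h => hne0 (congrFun h 0)
  have hne : ∀ᵐ x, G x ≠ 0 :=
    ae_ne_zero_of_analyticOnNhd (bandlimited.analyticOnNhd (Metric.isBounded_Icc _ _) hG) hne0
  have hsharp : G 0 = (CcalInf * ∫ x, ‖G x‖ : ℝ) := by
    rw [hG0, ← hGext, one_div_mul_cancel hpos.ne', Complex.ofReal_one]
  have hdual := apply_eq_mul_integral_inner_of_norm_le (μ := volume)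
    (ℓ := (LinearMap.proj 0).domRestrict (bandlimited (Set.Icc (-1 : ℝ) 1))) (g := ⟨G, hG⟩)
    (fun f hf => hf.2.1) (fun f => norm_apply_zero_le_CcalInf_mul f.2) hne hsharp ⟨F, hF⟩
  refine Eq.trans ?_ hdual.symm
  simp only [RCLike.inner_apply', div_mul_eq_mul_div, RCLike.ofReal_eq_complex_ofReal]

lemma real_sign_eq_div_abs (r : ℝ) : Real.sign r = r / |r| := by
  rcases lt_trichotomy r 0 with h | rfl | h
  · rw [Real.sign_of_neg h, abs_of_neg h, div_neg, div_self h.ne]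
  · simp
  · rw [Real.sign_of_pos h, abs_of_pos h, div_self h.ne']

/-- Variational characterization: the extremizer G of 𝒞(∞) with G(0) = 1 satisfies
𝒞(∞) ∫ sgn(G(x)) F(x) dx = F(0) for every F ∈ ℰ. -/
theorem extremizer_sign_identity
    (G : ℝ → ℝ) (hGc : Continuous G) (hGi : Integrable G)
    (hGe : ∀ x, G (-x) = G x)
    (hGs : Function.support (𝓕 (fun x => (G x : ℂ))) ⊆ Set.Icc (-1 : ℝ) 1)
    (hG0 : G 0 = 1)
    (hGext : 1 / (∫ x : ℝ, |G x|) = CcalInf) :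
    ∀ F : ℝ → ℂ, Continuous F → Integrable F →
      Function.support (𝓕 F) ⊆ Set.Icc (-1 : ℝ) 1 →
      (CcalInf : ℂ) * ∫ x : ℝ, (Real.sign (G x) : ℂ) * F x = F 0 := by
  intro F hFc hFi hFs
  simpa [real_sign_eq_div_abs] using extremizer_sign_identity_general
    (G := fun x => G x) ⟨by fun_prop, hGi.ofReal, hGs⟩ (by simp [hG0]) (by simpa using hGext)
    ⟨hFc, hFi, hFs⟩
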